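/- Let Z be a Gaussian random variable with mean μ ∈ ℝ and variance σ² > 0. Then for every ε ≥ μ, δ_Z(ε) = Φ((μ − ε)/σ) − e^{ε − μ + σ²/2} · Φ((μ − σ² − ε)/σ), where Φ is the standard normal CDF. -/

import Mathlib

open MeasureTheory ProbabilityTheory Real

/-- The standard normal CDF `Φ`. -/
noncomputable def stdNormalCDF (z : ℝ) : ℝ := (gaussianReal 0 1 (Set.Iic z)).toReal

/-!
On `z ≥ ε` the integrand defining the privacy curve is `1 - e ^ ε * e ^ (-z)`, and it vanishes
elsewhere, so the curve is the tail mass of the law minus `e ^ ε` times a truncated exponential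
moment. That moment is the moment generating function at `-1` times the tail mass of the law
tilted by `e ^ (-z)`. Tilting a Gaussian only shifts its mean, here from `m` to `m - σ ^ 2`, so
both tail masses are values of `Φ`.
-/

section Tilting

variable {Ω : Type*} [MeasurableSpace Ω] {μ : Measure Ω} {X : Ω → ℝ} {t : ℝ}

lemma setIntegral_exp_mul_eq_mgf_mul_tilted [SFinite μ]
    (hX : Integrable (fun ω ↦ exp (t * X ω)) μ) (s : Set Ω) :
    ∫ ω in s, exp (t * X ω) ∂μ = mgf X μ t * (μ.tilted (t * X ·)).real s := by
  rcases eq_zero_or_neZero μ with rfl | hμ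
  · simp
  have tilted_real : (μ.tilted (t * X ·)).real s = (∫ ω in s, exp (t * X ω) ∂μ) / mgf X μ t := by
    rw [measureReal_def, tilted_mul_apply_eq_ofReal_integral_mgf, integral_div,
      ENNReal.toReal_ofReal (div_nonneg (integral_nonneg fun _ ↦ exp_nonneg _) mgf_nonneg)]
  rw [tilted_real, mul_div_cancel₀ _ (mgf_pos' hμ.out hX).ne']

lemma complexMGF_tilted_mul (z : ℂ) :
    complexMGF X (μ.tilted (t * X ·)) z = complexMGF X μ (z + t) / mgf X μ t := by
  rw [complexMGF, integral_tilted_mul_eq_mgf, complexMGF, ← integral_div]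
  refine integral_congr_ae (.of_forall fun ω ↦ ?_)
  simp only [Complex.real_smul, Complex.ofReal_div, Complex.ofReal_exp, Complex.ofReal_mul]
  rw [div_mul_eq_mul_div, ← Complex.exp_add, add_mul, add_comm]

end Tilting

section Gaussian

open scoped NNReal

lemma gaussianReal_tilted_mul (m : ℝ) (v : ℝ≥0) (t : ℝ) :
    (gaussianReal m v).tilted (t * ·) = gaussianReal (m + t * v) v := by
  have : IsProbabilityMeasure ((gaussianReal m v).tilted (t * ·)) :=
    isProbabilityMeasure_tilted (integrable_exp_mul_gaussianReal t)
  refine Measure.ext_of_complexMGF_id_eq (funext fun z ↦ ?_)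
  have tilted_mgf := complexMGF_tilted_mul (μ := gaussianReal m v) (X := id) (t := t) z
  simp only [id_eq] at tilted_mgf
  rw [tilted_mgf, mgf_id_gaussianReal, complexMGF_id_gaussianReal, complexMGF_id_gaussianReal,
    Complex.ofReal_exp, ← Complex.exp_sub]
  push_cast
  ring_nf

lemma gaussianReal_real_Ici (m : ℝ) {σ : ℝ} (hσ : 0 < σ) (a : ℝ) :
    (gaussianReal m (σ ^ 2).toNNReal).real (Set.Ici a) = stdNormalCDF ((m - a) / σ) := by
  have unit_variance : (σ ^ 2).toNNReal / .mk (σ ^ 2) (sq_nonneg σ) = 1 := by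
    apply NNReal.eq
    rw [NNReal.coe_div, coe_toNNReal _ (sq_nonneg σ)]
    exact div_self (pow_ne_zero 2 hσ.ne')
  have standardize :
      HasLaw (fun x ↦ (m - x) / σ) (gaussianReal 0 1) (gaussianReal m (σ ^ 2).toNNReal) := by
    rw [← unit_variance, ← zero_div σ, ← sub_self m]
    exact gaussianReal_div_const (gaussianReal_const_sub HasLaw.id m) σ
  have preimage_Iic : (fun x ↦ (m - x) / σ) ⁻¹' Set.Iic ((m - a) / σ) = Set.Ici a := by
    ext x
    simp only [Set.mem_preimage, Set.mem_Iic, Set.mem_Ici, div_le_div_iff_of_pos_right hσ,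
      sub_le_sub_iff_left]
  rw [stdNormalCDF, ← standardize.map_eq, Measure.map_apply (by fun_prop) measurableSet_Iic,
    preimage_Iic, measureReal_def]

end Gaussian

section PrivacyCurve

/-- The privacy curve `δ_L(ε) = E[(1 - e ^ (-(L - ε)))⁺]` of a real random variable `L`, as a
function of the law `μ` of `L`. -/
noncomputable def privacyCurve (μ : Measure ℝ) (ε : ℝ) : ℝ :=
  ∫ z, max (1 - exp (-(z - ε))) 0 ∂μ

lemma max_one_sub_exp_neg_sub_zero_eq_indicator (ε : ℝ) :
    (fun z ↦ max (1 - exp (-(z - ε))) 0) =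
      (Set.Ici ε).indicator fun z ↦ 1 - exp (-(z - ε)) := by
  ext z
  rcases le_or_gt ε z with hz | hz
  · rw [Set.indicator_of_mem (Set.mem_Ici.2 hz), max_eq_left]
    exact sub_nonneg.2 (exp_le_one_iff.2 (by linarith))
  · rw [Set.indicator_of_notMem (Set.notMem_Ici.2 hz), max_eq_right]
    exact sub_nonpos.2 (one_le_exp (by linarith))

lemma privacyCurve_eq_sub_mgf_mul_tilted {μ : Measure ℝ} [IsFiniteMeasure μ]
    (hμ : Integrable (fun z ↦ exp (-1 * z)) μ) (ε : ℝ) :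
    privacyCurve μ ε = μ.real (Set.Ici ε) -
      exp ε * (mgf id μ (-1) * (μ.tilted (-1 * ·)).real (Set.Ici ε)) := by
  have exp_split (z : ℝ) : exp (-(z - ε)) = exp ε * exp (-1 * z) := by
    rw [← exp_add]
    ring_nf
  calc
    privacyCurve μ ε = ∫ z in Set.Ici ε, (1 - exp ε * exp (-1 * z)) ∂μ := by
      rw [privacyCurve, max_one_sub_exp_neg_sub_zero_eq_indicator,
        integral_indicator measurableSet_Ici]
      simp only [exp_split]
    _ = μ.real (Set.Ici ε) - exp ε * ∫ z in Set.Ici ε, exp (-1 * z) ∂μ := by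
      rw [integral_sub (integrable_const 1) (hμ.integrableOn.const_mul _), integral_const_mul,
        setIntegral_const, smul_eq_mul, mul_one]
    _ = μ.real (Set.Ici ε) -
        exp ε * (mgf id μ (-1) * (μ.tilted (-1 * ·)).real (Set.Ici ε)) :=
      congrArg (μ.real (Set.Ici ε) - exp ε * ·)
        (setIntegral_exp_mul_eq_mgf_mul_tilted (X := id) hμ _)

end PrivacyCurve

theorem stmt18_general (m σ : ℝ) (hσ : 0 < σ) (ε : ℝ) :
    privacyCurve (gaussianReal m (σ ^ 2).toNNReal) ε =
      stdNormalCDF ((m - ε) / σ)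
        - exp (ε - m + σ ^ 2 / 2) * stdNormalCDF ((m - σ ^ 2 - ε) / σ) := by
  have variance_coe : ((σ ^ 2).toNNReal : ℝ) = σ ^ 2 := coe_toNNReal _ (sq_nonneg σ)
  have tilted_mean : m + -1 * σ ^ 2 = m - σ ^ 2 := by ring
  have exponent : ε + (m * -1 + σ ^ 2 * (-1) ^ 2 / 2) = ε - m + σ ^ 2 / 2 := by ring
  rw [privacyCurve_eq_sub_mgf_mul_tilted (integrable_exp_mul_gaussianReal (-1)),
    gaussianReal_tilted_mul, mgf_id_gaussianReal, variance_coe, tilted_mean,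
    gaussianReal_real_Ici m hσ, gaussianReal_real_Ici _ hσ, ← mul_assoc, ← exp_add, exponent]

/-- Privacy curve of a Gaussian: for `Z ∼ N(m, σ²)` with `σ > 0` and `ε ≥ m`,
`δ_Z(ε) = Φ((m-ε)/σ) - e^{ε-m+σ²/2} Φ((m-σ²-ε)/σ)`. -/
theorem stmt18 (m σ : ℝ) (hσ : 0 < σ) (ε : ℝ) (hε : m ≤ ε) :
    (∫ z, max (1 - Real.exp (-(z - ε))) 0
        ∂(gaussianReal m (Real.toNNReal (σ ^ 2)))) =
      stdNormalCDF ((m - ε) / σ)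
        - Real.exp (ε - m + σ ^ 2 / 2) * stdNormalCDF ((m - σ ^ 2 - ε) / σ) :=
  stmt18_general m σ hσ ε
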